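/- (Generator limit of the stable multiplier.) Let α ∈ (0,1), m₁, m₂ ∈ [0,∞) with m₁ + m₂ > 0, β ∈ ℝ. Then for all x, ξ ∈ ℝ, lim_{t→0⁺} (1/t)·(e^{iξx(e^{-t}-1)} ψ_α(ξ)/ψ_α(e^{-t}ξ) - 1) = -iξx + iξΓ_α + α ∫_ℝ (e^{iξu} - 1) ν_α(du). -/

import Mathlib

open MeasureTheory

/-- The α-stable Lévy measure on ℝ with density
`u ↦ m₁ u^(-α-1) 1_{(0,∞)}(u) + m₂ |u|^(-α-1) 1_{(-∞,0)}(u)` w.r.t. Lebesgue measure. -/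
noncomputable def nuStable (α m₁ m₂ : ℝ) : Measure ℝ :=
  (volume : Measure ℝ).withDensity fun u =>
    ENNReal.ofReal (if 0 < u then m₁ * u ^ (-α - 1) else if u < 0 then m₂ * |u| ^ (-α - 1) else 0)

/-- Location parameter `Γ_α = β - (m₁ - m₂) ∫₀^∞ u^{-α}(1+u²)^{-1} du` for `α ∈ (0,1)`. -/
noncomputable def Gamma01 (α m₁ m₂ β : ℝ) : ℝ :=
  β - (m₁ - m₂) * ∫ u in Set.Ioi (0 : ℝ), u ^ (-α) / (1 + u ^ 2)

/-- Characteristic function of the `α`-stable law, `α ∈ (0,1)`: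
`ψ_α(t) = exp(itΓ_α + ∫_ℝ (e^{itu} - 1) ν_α(du))`. -/
noncomputable def psi01 (α m₁ m₂ β : ℝ) (t : ℝ) : ℂ :=
  Complex.exp (Complex.I * t * (Gamma01 α m₁ m₂ β) +
    ∫ u : ℝ, (Complex.exp (Complex.I * t * u) - 1) ∂(nuStable α m₁ m₂))

noncomputable def wDens (α m₁ m₂ : ℝ) (u : ℝ) : ℝ :=
  if 0 < u then m₁ * u ^ (-α - 1) else if u < 0 then m₂ * |u| ^ (-α - 1) else 0

lemma wDens_nonneg (α m₁ m₂ : ℝ) (hm₁ : 0 ≤ m₁) (hm₂ : 0 ≤ m₂) (u : ℝ) :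
    0 ≤ wDens α m₁ m₂ u := by
  unfold wDens
  split_ifs with h1 h2
  · positivity
  · positivity
  · exact le_rfl

lemma wDens_measurable (α m₁ m₂ : ℝ) : Measurable (wDens α m₁ m₂) := by
  unfold wDens
  refine Measurable.ite measurableSet_Ioi (by fun_prop) ?_
  exact Measurable.ite measurableSet_Iio (by fun_prop) (by fun_prop)

lemma wDens_scale (α m₁ m₂ c : ℝ) (hc : 0 < c) (u : ℝ) :
    wDens α m₁ m₂ u = c ^ (α + 1) * wDens α m₁ m₂ (c * u) := by
  have hcc : c ^ (α + 1) * c ^ (-α - 1) = 1 := by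
    rw [← Real.rpow_add hc]; ring_nf; simp
  unfold wDens
  rcases lt_trichotomy u 0 with h | h | h
  · have h2 : c * u < 0 := mul_neg_of_pos_of_neg hc h
    rw [if_neg h.not_gt, if_pos h, if_neg h2.not_gt, if_pos h2, abs_mul, abs_of_pos hc,
      Real.mul_rpow hc.le (abs_nonneg u)]
    linear_combination (-(m₂ * |u| ^ (-α - 1))) * hcc
  · subst h; simp
  · have h2 : 0 < c * u := mul_pos hc h
    rw [if_pos h, if_pos h2, Real.mul_rpow hc.le h.le]
    linear_combination (-(m₁ * u ^ (-α - 1))) * hcc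

lemma integral_nu (α m₁ m₂ : ℝ) (hm₁ : 0 ≤ m₁) (hm₂ : 0 ≤ m₂) (f : ℝ → ℂ) :
    ∫ u, f u ∂(nuStable α m₁ m₂) = ∫ u, wDens α m₁ m₂ u • f u := by
  have : nuStable α m₁ m₂ =
      (volume : Measure ℝ).withDensity fun u => ENNReal.ofReal (wDens α m₁ m₂ u) := rfl
  rw [this, integral_withDensity_eq_integral_toReal_smul
    (wDens_measurable α m₁ m₂).ennreal_ofReal (by simp)]
  simp only [ENNReal.toReal_ofReal (wDens_nonneg α m₁ m₂ hm₁ hm₂ _)]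

lemma integral_scale (α m₁ m₂ : ℝ) (hm₁ : 0 ≤ m₁) (hm₂ : 0 ≤ m₂) (c ξ : ℝ) (hc : 0 < c) :
    ∫ u : ℝ, (Complex.exp (Complex.I * ((c * ξ : ℝ) : ℂ) * u) - 1) ∂(nuStable α m₁ m₂) =
    ((c ^ α : ℝ) : ℂ) * ∫ u : ℝ, (Complex.exp (Complex.I * ξ * u) - 1) ∂(nuStable α m₁ m₂) := by
  rw [integral_nu α m₁ m₂ hm₁ hm₂, integral_nu α m₁ m₂ hm₁ hm₂]
  have h1 : ∀ u : ℝ, wDens α m₁ m₂ u • (Complex.exp (Complex.I * ((c * ξ : ℝ) : ℂ) * u) - 1) =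
      c ^ (α + 1) • (fun v : ℝ => wDens α m₁ m₂ v • (Complex.exp (Complex.I * ξ * v) - 1))
        (c * u) := by
    intro u
    simp only
    rw [smul_smul, ← wDens_scale α m₁ m₂ c hc]
    push_cast
    ring_nf
  simp_rw [h1]
  rw [integral_smul, Measure.integral_comp_mul_left
    (fun v : ℝ => wDens α m₁ m₂ v • (Complex.exp (Complex.I * ξ * v) - 1)) c, smul_smul,
    abs_of_pos (inv_pos.mpr hc), Real.rpow_add_one hc.ne', mul_assoc, mul_inv_cancel₀ hc.ne',
    mul_one, Complex.real_smul]

theorem stmt_10 (α m₁ m₂ β : ℝ) (hα : 0 < α) (hα1 : α < 1)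
    (hm₁ : 0 ≤ m₁) (hm₂ : 0 ≤ m₂) (hm : 0 < m₁ + m₂) (x ξ : ℝ) :
    Filter.Tendsto (fun t : ℝ =>
        (1 / (t : ℂ)) * (Complex.exp (Complex.I * ξ * x * ((Real.exp (-t) - 1 : ℝ) : ℂ)) *
          psi01 α m₁ m₂ β ξ / psi01 α m₁ m₂ β (Real.exp (-t) * ξ) - 1))
      (nhdsWithin 0 (Set.Ioi 0))
      (nhds (-(Complex.I * ξ * x) + Complex.I * ξ * (Gamma01 α m₁ m₂ β) +
        (α : ℂ) * ∫ u : ℝ, (Complex.exp (Complex.I * ξ * u) - 1) ∂(nuStable α m₁ m₂))) := by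
  set J : ℂ := ∫ u : ℝ, (Complex.exp (Complex.I * ξ * u) - 1) ∂(nuStable α m₁ m₂) with hJ
  set G : ℝ := Gamma01 α m₁ m₂ β with hG
  let F : ℝ → ℂ := fun t => Complex.I * ξ * x * ((Real.exp (-t) - 1 : ℝ) : ℂ) +
    Complex.I * ξ * G * ((1 - Real.exp (-t) : ℝ) : ℂ) + J * ((1 - Real.exp (-t * α) : ℝ) : ℂ)
  have hF0 : F 0 = 0 := by simp [F]
  have hd1 : HasDerivAt (fun t : ℝ => Real.exp (-t)) (-1) 0 := by
    simpa using (hasDerivAt_neg (0 : ℝ)).exp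
  have hd2 : HasDerivAt (fun t : ℝ => Real.exp (-t * α)) (-α) 0 := by
    simpa using ((hasDerivAt_neg (0 : ℝ)).mul_const α).exp
  have hF : HasDerivAt F (-(Complex.I * ξ * x) + Complex.I * ξ * G + α * J) 0 := by
    have a := ((hd1.sub_const 1).ofReal_comp).const_mul (Complex.I * ξ * x)
    have b := ((hd1.const_sub 1).ofReal_comp).const_mul (Complex.I * ξ * G)
    have c := ((hd2.const_sub 1).ofReal_comp).const_mul J
    refine ((a.add b).add c).congr_deriv ?_
    push_cast
    ring
  have hE : HasDerivAt (fun t => Complex.exp (F t))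
      (-(Complex.I * ξ * x) + Complex.I * ξ * G + α * J) 0 := by
    have := hF.cexp
    rwa [hF0, Complex.exp_zero, one_mul] at this
  have hT := hE.tendsto_slope_zero_right
  refine hT.congr fun t => ?_
  rw [zero_add, hF0, Complex.exp_zero, Complex.real_smul]
  have hc : (Real.exp (-t)) ^ α = Real.exp (-t * α) := (Real.exp_mul _ _).symm
  unfold psi01
  rw [integral_scale α m₁ m₂ hm₁ hm₂ _ ξ (Real.exp_pos _), hc, ← hJ, ← hG, ← Complex.exp_add,
    ← Complex.exp_sub, one_div, Complex.ofReal_inv]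
  congr 3
  simp only [F]
  push_cast
  ring
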